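/- arXiv:math/0109092 — 2 statements merged into one kernel-verified Lean document; each statement's English description precedes it below -/
import Mathlib

section
/- For every finite poset P, the number of dropless labelings of P equals the number of acyclic orientations of the incomparability graph of P: dl(P) = ao(inc(P)). -/
/-!
Write a labeling of a finite poset as the word `w₀ w₁ … w_{p-1}` of its elements in the order of
their labels; it is dropless when no letter is followed immediately by a smaller one. A labeling
induces an acyclic orientation of the incomparability graph: every edge points towards the larger
label. Restricted to dropless labelings, this map is a bijection.

*Injectivity.* In a dropless word, if `w_j` is comparable to all of `w_i, …, w_{j-1}`, then
`w_j` exceeds all of them (`lt_of_dropless`): otherwise, walking back from `w_j`, the first letter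
above `w_j` would be followed by a letter below (or equal to) `w_j`, which is a drop. Now let two
dropless words induce the same orientation, and let `a ≠ b` be the letters at the first position
where they differ. In the first word `b` comes later, and none of the letters from `a` up to `b` is
incomparable to `b`, as that edge would be oriented differently in the second word. Hence `a < b`,
and `b < a` by symmetry (`dropless_injective`).

*Surjectivity.* Given an acyclic orientation, remove repeatedly a minimal element `m` among the
sources of what remains (`exists_dropless_list`). If the next letter `h` were smaller than `m`, it
would already have been a source one step earlier, contradicting the minimality of `m`.
-/

open Set Polynomial

namespace SkewBorder

noncomputable section

/-- A partition, as a weakly decreasing sequence of naturals that is eventually zero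
(equivalently, has finite sum). -/
def IsPartitionFn (f : ℕ → ℕ) : Prop :=
  (∀ i j, i ≤ j → f j ≤ f i) ∧ ∃ N, ∀ i, N ≤ i → f i = 0

/-- A skew shape `λ/μ`, given by a pair of partitions `μ ⊆ λ`. -/
structure SkewShape where
  lam : ℕ → ℕ
  mu : ℕ → ℕ
  lam_part : IsPartitionFn lam
  mu_part : IsPartitionFn mu
  mu_le : ∀ i, mu i ≤ lam i

/-- The Young diagram (set of squares) of a skew diagram determined by outer
function `f` and inner function `g`; square `(i,j)` (row `i`, column `j`,
`0`-based, rows increasing downwards) belongs to it iff `0 ≤ i` and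
`g i ≤ j < f i`. -/
def skewCells (f g : ℕ → ℕ) : Set (ℤ × ℤ) :=
  {p | 0 ≤ p.1 ∧ (g p.1.toNat : ℤ) ≤ p.2 ∧ p.2 < (f p.1.toNat : ℤ)}

/-- The squares of the skew shape `λ/μ`. -/
def SkewShape.cells (sh : SkewShape) : Set (ℤ × ℤ) := skewCells sh.lam sh.mu

/-- An outside top corner of `λ/μ`. -/
def OutsideCorner (sh : SkewShape) (p : ℤ × ℤ) : Prop :=
  p ∈ sh.cells ∧ (p.1 - 1, p.2) ∉ sh.cells ∧ (p.1, p.2 - 1) ∉ sh.cells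

/-- An inside top corner of `λ/μ`. -/
def InsideCorner (sh : SkewShape) (p : ℤ × ℤ) : Prop :=
  p ∈ sh.cells ∧ (p.1 - 1, p.2) ∈ sh.cells ∧ (p.1, p.2 - 1) ∈ sh.cells ∧
    (p.1 - 1, p.2 - 1) ∉ sh.cells

/-- `d⁺(λ/μ)`: the total number of outside diagonal squares. -/
def SkewShape.dplus (sh : SkewShape) : ℕ :=
  {p : ℤ × ℤ | p ∈ sh.cells ∧ ∃ q : ℤ × ℤ, OutsideCorner sh q ∧
    ∃ n : ℕ, p = (q.1 + n, q.2 + n)}.ncard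

/-- `d⁻(λ/μ)`: the total number of inside diagonal squares. -/
def SkewShape.dminus (sh : SkewShape) : ℕ :=
  {p : ℤ × ℤ | p ∈ sh.cells ∧ ∃ q : ℤ × ℤ, InsideCorner sh q ∧
    ∃ n : ℕ, p = (q.1 + n, q.2 + n)}.ncard

/-- The (Durfee/Frobenius) rank of a skew shape: `rank(λ/μ) = d⁺(λ/μ) − d⁻(λ/μ)`. -/
def SkewShape.rank (sh : SkewShape) : ℕ := sh.dplus - sh.dminus

/-- Two squares are adjacent if they share an edge. -/
def CellAdj (p q : ℤ × ℤ) : Prop :=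
  (p.1 = q.1 ∧ (p.2 = q.2 + 1 ∨ q.2 = p.2 + 1)) ∨
  (p.2 = q.2 ∧ (p.1 = q.1 + 1 ∨ q.1 = p.1 + 1))

/-- A set of squares is connected (equivalently, the interior of the corresponding
union of closed unit squares is a connected open set): it is nonempty and any two
of its squares are joined by a path of edge-adjacent squares inside the set. -/
def IsConnectedCellSet (B : Set (ℤ × ℤ)) : Prop :=
  B.Nonempty ∧ ∀ p ∈ B, ∀ q ∈ B,
    Relation.ReflTransGen (fun x y => y ∈ B ∧ CellAdj x y) p q

/-- A set of squares is a skew diagram if it is the diagram of some `λ/μ`. -/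
def IsSkewDiagram (B : Set (ℤ × ℤ)) : Prop :=
  ∃ f g : ℕ → ℕ, IsPartitionFn f ∧ IsPartitionFn g ∧ (∀ i, g i ≤ f i) ∧ B = skewCells f g

/-- A border strip: a nonempty connected skew shape with no `2 × 2` square. -/
def IsBorderStrip (B : Set (ℤ × ℤ)) : Prop :=
  IsSkewDiagram B ∧ IsConnectedCellSet B ∧
    ∀ p : ℤ × ℤ, ¬ (p ∈ B ∧ (p.1 + 1, p.2) ∈ B ∧ (p.1, p.2 + 1) ∈ B ∧ (p.1 + 1, p.2 + 1) ∈ B)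

/-- A border strip decomposition of `λ/μ`: a partition of its squares into
pairwise disjoint border strips. -/
def IsBSD (sh : SkewShape) (D : Set (Set (ℤ × ℤ))) : Prop :=
  (∀ B ∈ D, IsBorderStrip B) ∧ D.PairwiseDisjoint id ∧ ⋃₀ D = sh.cells

/-- A minimal border strip decomposition: one with the fewest possible strips. -/
def IsMinBSD (sh : SkewShape) (D : Set (Set (ℤ × ℤ))) : Prop :=
  IsBSD sh D ∧ ∀ D', IsBSD sh D' → D.ncard ≤ D'.ncard

/-- `mbsd(λ/μ)`: the number of minimal border strip decompositions. -/
noncomputable def mbsd (sh : SkewShape) : ℕ := {D : Set (Set (ℤ × ℤ)) | IsMinBSD sh D}.ncard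

/-- The step at diagonal position `k` of the boundary path of the partition `f`
(read from lower left to upper right) is vertical, i.e. the corresponding letter of
the Comét code of `f` is `0`.  (Vertical steps occur exactly at the positions
`f i − i − 1`, `i ≥ 0`.)  For a skew shape `λ/μ`, taking `f = λ` gives the lower
envelope (the top row `c` of `code(λ/μ)`) and `f = μ` gives the upper envelope
(the bottom row `d`). -/
def vertStep (f : ℕ → ℕ) (k : ℤ) : Prop := ∃ i : ℕ, k = (f i : ℤ) - i - 1

/-- The zigzag `{(i,j), (i−1,j), (i−1,j−1), (i−2,j−1), (i−2,j−2), …}` starting at a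
square `p = (i,j)`, used to define the snake of a horizontal lower-envelope edge. -/
def zigzagH (p : ℤ × ℤ) : Set (ℤ × ℤ) :=
  {q | ∃ t : ℕ, q = (p.1 - (((t + 1) / 2 : ℕ) : ℤ), p.2 - ((t / 2 : ℕ) : ℤ))}

/-- The zigzag `{(i,j), (i,j−1), (i−1,j−1), (i−1,j−2), (i−2,j−2), …}` starting at a
square `p = (i,j)`, used to define the snake of a vertical lower-envelope edge. -/
def zigzagV (p : ℤ × ℤ) : Set (ℤ × ℤ) :=
  {q | ∃ t : ℕ, q = (p.1 - ((t / 2 : ℕ) : ℤ), p.2 - (((t + 1) / 2 : ℕ) : ℤ))}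

/-- The diagram of the outer partition `λ` alone. -/
def lamCells (sh : SkewShape) : Set (ℤ × ℤ) := skewCells sh.lam (fun _ => 0)

/-- The snake `S_e` of the edge `e` of the lower envelope of `λ/μ` at diagonal
position `k`.  If `e` is vertical it is the right-hand edge of the square
`(i, λ_i − 1)` where `k = λ_i − i − 1`, and `S_e = (λ/μ) ∩ zigzagV` from that square;
if `e` is horizontal it is the lower edge of the lowest square of `λ` on the
diagonal `j − i = k + 1`, and `S_e = (λ/μ) ∩ zigzagH` from that square.
(If no such square of `λ/μ` exists, i.e. `e` also lies on the upper envelope, the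
intersection is empty, in accordance with `S_e = ∅`.) -/
def snake (sh : SkewShape) (k : ℤ) : Set (ℤ × ℤ) :=
  {q | q ∈ sh.cells ∧
    ((vertStep sh.lam k ∧ ∃ i : ℕ, k = (sh.lam i : ℤ) - i - 1 ∧
        q ∈ zigzagV ((i : ℤ), (sh.lam i : ℤ) - 1)) ∨
     (¬ vertStep sh.lam k ∧ ∃ p : ℤ × ℤ, p ∈ lamCells sh ∧ p.2 - p.1 = k + 1 ∧
        (p.1 + 1, p.2 + 1) ∉ lamCells sh ∧ q ∈ zigzagH p))}

/-- The snake at position `k` is a left snake: it comes from a vertical edge and has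
even length (= odd number of squares); its symbol in the snake sequence is `L_m`
with `m = (snake sh k).ncard / 2`. -/
def IsLeftSnakePos (sh : SkewShape) (k : ℤ) : Prop :=
  vertStep sh.lam k ∧ Odd (snake sh k).ncard

/-- The snake at position `k` is a right snake: it comes from a horizontal edge and
has even length (= odd number of squares); its symbol in the snake sequence is `R_m`
with `m = (snake sh k).ncard / 2`. -/
def IsRightSnakePos (sh : SkewShape) (k : ℤ) : Prop :=
  ¬ vertStep sh.lam k ∧ Odd (snake sh k).ncard

/-- An interval set of `λ/μ`: a set of `rank(λ/μ)` pairs `(u,v)` with `u < v`,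
all coordinates distinct, `q_u` a left-snake symbol `L_s` and `q_v` a right-snake
symbol `R_t` in the snake sequence. -/
def IsIntervalSet (sh : SkewShape) (I : Finset (ℤ × ℤ)) : Prop :=
  I.card = sh.rank ∧
  (∀ p ∈ I, p.1 < p.2 ∧ IsLeftSnakePos sh p.1 ∧ IsRightSnakePos sh p.2) ∧
  (∀ p ∈ I, ∀ q ∈ I, p ≠ q → p.1 ≠ q.1 ∧ p.1 ≠ q.2 ∧ p.2 ≠ q.1 ∧ p.2 ≠ q.2)

/-- `is(λ/μ)`: the number of interval sets of `λ/μ`. -/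
noncomputable def isNum (sh : SkewShape) : ℕ :=
  {I : Finset (ℤ × ℤ) | IsIntervalSet sh I}.ncard

/-- `L` is a link of the snake `S`: a pair of consecutive (edge-adjacent) squares of `S`. -/
def IsLinkOf (L S : Set (ℤ × ℤ)) : Prop :=
  ∃ p q : ℤ × ℤ, p ∈ S ∧ q ∈ S ∧ CellAdj p q ∧ L = {p, q}

/-- `L` is a link of some snake of `λ/μ`. -/
def IsLink (sh : SkewShape) (L : Set (ℤ × ℤ)) : Prop := ∃ k : ℤ, IsLinkOf L (snake sh k)

/-- Two links are consecutive if they are distinct and have a square in common. -/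
def ConsecutiveLinks (L1 L2 : Set (ℤ × ℤ)) : Prop := L1 ≠ L2 ∧ (L1 ∩ L2).Nonempty

/-- A border strip decomposition uses a link if some of its strips contains both
squares of the link. -/
def DecompUses (D : Set (Set (ℤ × ℤ))) (L : Set (ℤ × ℤ)) : Prop := ∃ B ∈ D, L ⊆ B

/-- A border strip tableau of shape `λ/μ` with `m` strips: a chain of partitions
`μ = c 0 ⊆ c 1 ⊆ ⋯ ⊆ c m = λ` each of whose successive quotients is a border strip. -/
def IsBSTableau (sh : SkewShape) (m : ℕ) (c : ℕ → ℕ → ℕ) : Prop :=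
  c 0 = sh.mu ∧ c m = sh.lam ∧ (∀ s, s ≤ m → IsPartitionFn (c s)) ∧
  ∀ s, s < m → (∀ i, c s i ≤ c (s + 1) i) ∧ IsBorderStrip (skewCells (c (s + 1)) (c s))

/-- The `s`-th border strip `c (s+1) / c s` of a tableau. -/
def tabStrip (c : ℕ → ℕ → ℕ) (s : ℕ) : Set (ℤ × ℤ) := skewCells (c (s + 1)) (c s)

/-- The border strip decomposition corresponding to a border strip tableau. -/
def tabDecomp (m : ℕ) (c : ℕ → ℕ → ℕ) : Set (Set (ℤ × ℤ)) :=
  {B | ∃ s, s < m ∧ B = tabStrip c s}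

/-- A border strip tableau, normalized so that the chain is constant from `m` on
(so that each abstract tableau is represented by exactly one pair `(m, c)`). -/
def IsNormalizedTab (sh : SkewShape) (m : ℕ) (c : ℕ → ℕ → ℕ) : Prop :=
  IsBSTableau sh m c ∧ ∀ s, m ≤ s → c s = sh.lam

/-- `mbst(λ/μ)`: the number of minimal border strip tableaux of shape `λ/μ`
(those whose corresponding decomposition is minimal). -/
noncomputable def mbst (sh : SkewShape) : ℕ :=
  {tc : ℕ × (ℕ → ℕ → ℕ) | IsNormalizedTab sh tc.1 tc.2 ∧
    IsMinBSD sh (tabDecomp tc.1 tc.2)}.ncard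

/-- The tableau `(m, c)` corresponds to the interval set `I`: in terms of the code,
the strip added from `c s` to `c (s+1)` replaces the vertical step at position `u`
by the one at position `v`, for some pair `(u,v) ∈ I`. -/
def TabCorresponds (sh : SkewShape) (m : ℕ) (c : ℕ → ℕ → ℕ) (I : Finset (ℤ × ℤ)) : Prop :=
  ∀ s, s < m → ∀ u v : ℤ,
    (vertStep (c s) u ∧ ¬ vertStep (c (s + 1)) u ∧
      vertStep (c (s + 1)) v ∧ ¬ vertStep (c s) v) →
    (u, v) ∈ I

/-- `ht(B)`: one less than the number of rows of a border strip. -/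
noncomputable def stripHt (B : Set (ℤ × ℤ)) : ℕ := {i : ℤ | ∃ j : ℤ, (i, j) ∈ B}.ncard - 1

/-- `ht(T)`: the sum of the heights of the strips of a tableau. -/
noncomputable def htTab (m : ℕ) (c : ℕ → ℕ → ℕ) : ℕ :=
  ∑ s ∈ Finset.range m, stripHt (tabStrip c s)

/-- The type of an interval set: the multiset of the numbers `v − u`. -/
def intervalSetType (I : Finset (ℤ × ℤ)) : Multiset ℕ :=
  I.val.map fun p => (p.2 - p.1).toNat

/-- The decomposition `D` has type `σ`: for every `n`, the multiplicity of `n` in `σ`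
is the number of strips of `D` of size `n`. -/
def DecompHasType (D : Set (Set (ℤ × ℤ))) (σ : Multiset ℕ) : Prop :=
  ∀ n : ℕ, Multiset.count n σ = {B ∈ D | B.ncard = n}.ncard

/-- `is_σ(λ/μ)`: the number of interval sets of type `σ`. -/
noncomputable def isTyped (sh : SkewShape) (σ : Multiset ℕ) : ℕ :=
  {I : Finset (ℤ × ℤ) | IsIntervalSet sh I ∧ intervalSetType I = σ}.ncard

/-- `mbsd_σ(λ/μ)`: the number of minimal border strip decompositions of type `σ`. -/
noncomputable def mbsdTyped (sh : SkewShape) (σ : Multiset ℕ) : ℕ :=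
  {D : Set (Set (ℤ × ℤ)) | IsMinBSD sh D ∧ DecompHasType D σ}.ncard

/-- `c(I)`: the number of crossings `u_i < u_j < v_i < v_j` of an interval set. -/
def crossings (I : Finset (ℤ × ℤ)) : ℕ :=
  ((I ×ˢ I).filter fun q => q.1.1 < q.2.1 ∧ q.2.1 < q.1.2 ∧ q.1.2 < q.2.2).card

/-- `I` has no crossings. -/
def Noncrossing (I : Finset (ℤ × ℤ)) : Prop :=
  ∀ p ∈ I, ∀ q ∈ I, ¬ (p.1 < q.1 ∧ q.1 < p.2 ∧ p.2 < q.2)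

/-- `z(λ/μ) = z(1) + ⋯ + z(r)` computed from the crossing-free interval set `P`:
`z(i) = #{j : u_i < j < v_i, c_j = 0}`. -/
noncomputable def zval (sh : SkewShape) (P : Finset (ℤ × ℤ)) : ℕ :=
  ∑ p ∈ P, {j : ℤ | p.1 < j ∧ j < p.2 ∧ vertStep sh.lam j}.ncard

/-- The tableau has type `ν` (a list of strip sizes, in order). -/
def TabHasType (c : ℕ → ℕ → ℕ) (ν : List ℕ) : Prop :=
  ∀ s, s < ν.length → (tabStrip c s).ncard = ν.getD s 0

/-- `χ^{λ/μ}(ν) = Σ_T (−1)^{ht(T)}`, summed over all border strip tableaux of shape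
`λ/μ` and type `ν` (the Murnaghan–Nakayama rule). -/
noncomputable def chi (sh : SkewShape) (ν : List ℕ) : ℤ :=
  ∑ᶠ c ∈ {c : ℕ → ℕ → ℕ | IsNormalizedTab sh ν.length c ∧ TabHasType c ν},
    (-1 : ℤ) ^ htTab ν.length c

/-- `h_a(1^t)` as a polynomial in `t`: the binomial coefficient
`C(t + a − 1, a) = t(t+1)⋯(t+a−1)/a!`, and `0` for `a < 0`. -/
noncomputable def hPoly (a : ℤ) : Polynomial ℚ :=
  if a < 0 then 0
  else Polynomial.C ((a.toNat.factorial : ℚ))⁻¹ *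
    ∏ s ∈ Finset.range a.toNat, (Polynomial.X + Polynomial.C (s : ℚ))

/-- The principal specialization `s_{λ/μ}(1^t)` as a polynomial in `t`, via the
Jacobi–Trudi identity: `det ( C(t + λ_i − μ_j − i + j − 1, λ_i − μ_j − i + j) )`. -/
noncomputable def jtPoly (sh : SkewShape) (n : ℕ) : Polynomial ℚ :=
  (Matrix.of fun i j : Fin n =>
    hPoly ((sh.lam i : ℤ) - (sh.mu j : ℤ) - ((i : ℕ) : ℤ) + ((j : ℕ) : ℤ))).det

/-- The orientation of the incomparability graph in which every edge points towards the endpoint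
with the larger label. -/
def inducedOrientation {α : Type} [PartialOrder α] {n : ℕ} (f : α ≃ Fin n) (x y : α) : Prop :=
  (¬ x ≤ y ∧ ¬ y ≤ x) ∧ f x < f y

/-- In a dropless word, a letter comparable to every letter of the block directly before it lies
above all of that block. -/
lemma lt_of_dropless {α : Type} [PartialOrder α] {n : ℕ} (f : α ≃ Fin n)
    (hf : ∀ i j : Fin n, (j : ℕ) = (i : ℕ) + 1 → ¬ f.symm j < f.symm i) (j : Fin n) (d : ℕ) :
    ∀ i : Fin n, (i : ℕ) + d + 1 = j →
      (∀ k, i ≤ k → k < j → f.symm k ≤ f.symm j ∨ f.symm j ≤ f.symm k) →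
      f.symm i < f.symm j := by
  induction d with
  | zero =>
    intro i hij hc
    have hlt : i < j := by rw [Fin.lt_def]; omega
    have hne : f.symm i ≠ f.symm j := fun h => hlt.ne (f.symm.injective h)
    rcases hc i le_rfl hlt with h | h
    · exact lt_of_le_of_ne h hne
    · exact absurd (lt_of_le_of_ne h hne.symm) (hf i j (by omega))
  | succ d ih =>
    intro i hij hc
    have hlt : i < j := by rw [Fin.lt_def]; omega
    have hne : f.symm i ≠ f.symm j := fun h => hlt.ne (f.symm.injective h)
    let i' : Fin n := ⟨i + 1, by omega⟩
    have hi' : f.symm i' < f.symm j := ih i' (by simp only [i']; omega) fun k hk hkj =>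
      hc k (le_trans (by rw [Fin.le_def]; simp only [i']; omega) hk) hkj
    rcases hc i le_rfl hlt with h | h
    · exact lt_of_le_of_ne h hne
    · exact absurd (hi'.trans_le h) (hf i i' rfl)

/-- At the first position `i` where two words with the same induced orientation differ, the letter
of a dropless word is smaller than the letter of the other word. -/
lemma lt_of_first_difference {α : Type} [PartialOrder α] {n : ℕ} (f g : α ≃ Fin n)
    (hf : ∀ i j : Fin n, (j : ℕ) = (i : ℕ) + 1 → ¬ f.symm j < f.symm i)
    (h : inducedOrientation f = inducedOrientation g) (i : Fin n)
    (hi : ∀ k < i, f.symm k = g.symm k) (hne : f.symm i ≠ g.symm i) :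
    f.symm i < g.symm i := by
  obtain ⟨j, hj⟩ : ∃ j, f.symm j = g.symm i := ⟨f (g.symm i), by simp⟩
  have hij : i < j := by
    rcases lt_trichotomy i j with h1 | h1 | h1
    · exact h1
    · subst h1
      exact absurd hj hne
    · rw [hi j h1] at hj
      exact absurd (g.symm.injective hj) h1.ne
  rw [← hj]
  refine lt_of_dropless f hf j (j - i - 1) i (by rw [Fin.lt_def] at hij; omega) ?_
  intro k hik hkj
  by_contra! hc
  have h1 : inducedOrientation f (f.symm k) (f.symm j) := ⟨hc, by simpa using hkj⟩
  rw [h] at h1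
  have h2 : g (f.symm k) < i := by simpa [hj] using h1.2
  -- A letter before position `i` in the second word has the same position in the first.
  have h3 := hi _ h2
  rw [Equiv.symm_apply_apply] at h3
  rw [f.symm.injective h3] at h2
  exact absurd h2 (not_lt.mpr hik)

lemma dropless_injective {α : Type} [PartialOrder α] {n : ℕ} (f g : α ≃ Fin n)
    (hf : ∀ i j : Fin n, (j : ℕ) = (i : ℕ) + 1 → ¬ f.symm j < f.symm i)
    (hg : ∀ i j : Fin n, (j : ℕ) = (i : ℕ) + 1 → ¬ g.symm j < g.symm i)
    (h : inducedOrientation f = inducedOrientation g) : f = g := by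
  have key : ∀ i, f.symm i = g.symm i := by
    intro i
    induction i using WellFoundedLT.induction with
    | ind i ih =>
      by_contra hne
      exact lt_asymm (lt_of_first_difference f g hf h i ih hne)
        (lt_of_first_difference g f hg h.symm i (fun k hk => (ih k hk).symm) (Ne.symm hne))
  exact Equiv.symm_bijective.injective (Equiv.ext key)

/-- The greedy construction: the elements of `s` can be listed without drops and compatibly with
the acyclic orientation `r`. -/
lemma exists_dropless_list {α : Type} [Fintype α] [PartialOrder α] (r : α → α → Prop)
    (hinc : ∀ x y, r x y → ¬ x ≤ y ∧ ¬ y ≤ x) (hac : ∀ x, ¬ Relation.TransGen r x x)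
    (N : ℕ) : ∀ s : Finset α, s.card = N →
      ∃ l : List α, l.Nodup ∧ (∀ x, x ∈ l ↔ x ∈ s) ∧
        l.Pairwise (fun a b => ¬ r b a) ∧ l.IsChain (fun a b => ¬ b < a) := by
  classical
  induction N with
  | zero =>
    intro s hs
    exact ⟨[], by simp, by simp [Finset.card_eq_zero.mp hs], by simp, by simp⟩
  | succ N ih =>
    intro s hs
    have hwf : WellFounded (Relation.TransGen r) := by
      haveI : Std.Irrefl (Relation.TransGen r) := ⟨hac⟩
      exact Finite.wellFounded_of_trans_of_irrefl _
    have hsne : s.Nonempty := Finset.card_pos.mp (by omega)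
    -- `m` is a minimal element of the set of sources of `s`.
    have hsrc : (s.filter fun a => ∀ b ∈ s, ¬ r b a).Nonempty := by
      obtain ⟨a, ha, hmin⟩ := hwf.has_min (s : Set α) hsne
      exact ⟨a, Finset.mem_filter.mpr ⟨ha, fun b hb hr => hmin b hb (.single hr)⟩⟩
    obtain ⟨m, hm⟩ := Finset.exists_minimal hsrc
    obtain ⟨hms, hmr⟩ := Finset.mem_filter.mp hm.prop
    obtain ⟨l, hnd, hmem, hpw, hch⟩ := ih (s.erase m) (by rw [Finset.card_erase_of_mem hms]; omega)
    refine ⟨m :: l, ?_, ?_, ?_, ?_⟩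
    · exact List.nodup_cons.mpr ⟨by simp [hmem], hnd⟩
    · intro x
      by_cases hx : x = m <;> simp [hmem, hx, hms]
    · refine List.pairwise_cons.mpr ⟨fun b hb => ?_, hpw⟩
      exact hmr b (Finset.mem_of_mem_erase ((hmem b).mp hb))
    · cases l with
      | nil => simp
      | cons h t =>
        refine List.isChain_cons_cons.mpr ⟨fun hlt => ?_, hch⟩
        -- The next letter `h` was already a source of `s`, since it is comparable to `m`.
        have hsource : h ∈ s.filter fun a => ∀ b ∈ s, ¬ r b a := by
          refine Finset.mem_filter.mpr
            ⟨Finset.mem_of_mem_erase ((hmem h).mp (by simp)), fun b hb hr => ?_⟩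
          by_cases hbm : b = m
          · subst hbm
            exact (hinc _ _ hr).2 hlt.le
          · have hb' := (hmem b).mpr (Finset.mem_erase.mpr ⟨hbm, hb⟩)
            rcases List.mem_cons.mp hb' with rfl | hbt
            · exact (hinc _ _ hr).1 le_rfl
            · exact (List.pairwise_cons.mp hpw).1 b hbt hr
        exact hm.not_lt hsource hlt

lemma exists_dropless_labeling {α : Type} [Fintype α] [PartialOrder α] (r : α → α → Prop)
    (hinc : ∀ x y, r x y → ¬ x ≤ y ∧ ¬ y ≤ x) (hac : ∀ x, ¬ Relation.TransGen r x x) :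
    ∃ f : α ≃ Fin (Fintype.card α),
      (∀ i j : Fin (Fintype.card α), (j : ℕ) = (i : ℕ) + 1 → ¬ f.symm j < f.symm i) ∧
      ∀ x y, r x y → f x < f y := by
  classical
  obtain ⟨l, hnd, hmem, hpw, hch⟩ := exists_dropless_list r hinc hac _ Finset.univ rfl
  have hall : ∀ x, x ∈ l := fun x => (hmem x).mpr (Finset.mem_univ x)
  let e : Fin l.length ≃ α := hnd.getEquivOfForallMemList l hall
  have hlen : l.length = Fintype.card α := by simpa using Fintype.card_congr e
  have he : ∀ i : Fin (Fintype.card α),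
      ((finCongr hlen).symm.trans e) i = l[(i : ℕ)]'(by omega) := fun i => rfl
  refine ⟨((finCongr hlen).symm.trans e).symm, ?_, ?_⟩
  · intro i j hij
    rw [Equiv.symm_symm, he, he]
    have := List.isChain_iff_getElem.mp hch i (by omega)
    simpa only [hij] using this
  · intro x y hr
    by_contra hlt
    rcases (not_lt.mp hlt).lt_or_eq with h | h
    · have := List.pairwise_iff_getElem.mp hpw _ _ (by omega) (by omega) h
      rw [← he, ← he, Equiv.apply_symm_apply, Equiv.apply_symm_apply] at this
      exact this hr
    · rw [Equiv.symm_apply_eq, Equiv.apply_symm_apply] at h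
      subst h
      exact hac _ (.single hr)

/-- For every finite poset `P`, the number of dropless labelings of
`P` equals the number of acyclic orientations of the incomparability graph of `P`. -/
theorem dropless_eq_acyclicOrientations (α : Type) [Fintype α] [PartialOrder α] :
    {f : α ≃ Fin (Fintype.card α) |
        ∀ i j : Fin (Fintype.card α), (j : ℕ) = (i : ℕ) + 1 → ¬ f.symm j < f.symm i}.ncard =
    {r : α → α → Prop |
        (∀ x y, r x y → ¬ x ≤ y ∧ ¬ y ≤ x) ∧
        (∀ x y, (¬ x ≤ y ∧ ¬ y ≤ x) → (r x y ↔ ¬ r y x)) ∧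
        (∀ x, ¬ Relation.TransGen r x x)}.ncard := by
  refine Set.ncard_congr (fun f _ => inducedOrientation f) ?_ ?_ ?_
  · intro f _
    refine ⟨fun x y h => h.1, fun x y hxy => ?_, fun x hx => ?_⟩
    · have hne : f x ≠ f y := fun h => hxy.1 (f.injective h).le
      refine ⟨fun h h' => lt_asymm h.2 h'.2, fun h => ⟨hxy, ?_⟩⟩
      exact lt_of_le_of_ne (not_lt.mp fun h' => h ⟨hxy.symm, h'⟩) hne
    · have hmono : ∀ y, Relation.TransGen (inducedOrientation f) x y → f x < f y := by
        intro y hy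
        induction hy with
        | single h => exact h.2
        | tail _ h ih => exact ih.trans h.2
      exact lt_irrefl _ (hmono x hx)
  · intro f g hf hg h
    exact dropless_injective f g hf hg h
  · rintro r ⟨hinc, hor, hac⟩
    obtain ⟨f, hf, hmono⟩ := exists_dropless_labeling r hinc hac
    refine ⟨f, hf, ?_⟩
    funext x y
    refine propext ⟨fun h => ?_, fun h => ⟨hinc x y h, hmono x y h⟩⟩
    exact (hor x y h.1).mpr fun h' => lt_asymm h.2 (hmono y x h')

end

end SkewBorder
end

section
/- Let I = {(u_1,v_1),…,(u_r,v_r)} be a finite set of ordered pairs of integers with u_i < v_i for all i and all u_i, v_i distinct, and for 1 ≤ i ≤ r set φ(i) = #{j : v_j > v_i} − #{j : u_j > v_i}. Then the number of dropless labelings of the interval order P_I is dl(P_I) = (φ(1)+1)(φ(2)+1)⋯(φ(r)+1). -/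
/-!
Regard a labeling of the interval order as the list of its elements in label order; it is dropless
iff no entry is immediately followed by a smaller one. Such lists are counted by building them up
one element at a time, in order of decreasing right endpoint.

Let `a` have the least right endpoint among the elements present. Then `a` is minimal, so in a
dropless list of the other elements it may be inserted at the front or just after any `q` with
`¬ a < q`, and nowhere else. Conversely, deleting `a` from a dropless list leaves a dropless list:
if `y, a, z` are consecutive and `z < y`, then `a < y` as well, because the right endpoint of `a`
is smaller than that of `z`. Hence `a` contributes the factor `1 + #{q : ¬ a < q}`
(`countP_insertions`), which is `φ(a) + 1` because every other right endpoint exceeds that of `a`.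
The factors of the remaining elements do not change when `a` is added, since neither endpoint of
`a` lies beyond their right endpoints (`countP_dropless_permutations'`).
-/

open Set Polynomial

namespace SkewBorder

noncomputable section

/-- `NoDrop p q`: the interval `q` is not smaller than `p` in the interval order, so `q` may directly
follow `p` in a dropless list. -/
def NoDrop (p q : ℤ × ℤ) : Prop := ¬ q.2 < p.1

instance : DecidableRel NoDrop := fun p q => inferInstanceAs (Decidable (¬ q.2 < p.1))

/-- A list of intervals in which no entry is immediately followed by a smaller one. -/
def Dropless (l : List (ℤ × ℤ)) : Prop := l.IsChain NoDrop

instance (l : List (ℤ × ℤ)) : Decidable (Dropless l) :=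
  inferInstanceAs (Decidable (l.IsChain NoDrop))

lemma dropless_singleton (y : ℤ × ℤ) : Dropless [y] := List.isChain_singleton y

lemma dropless_cons_cons (y z : ℤ × ℤ) (t : List (ℤ × ℤ)) :
    Dropless (y :: z :: t) ↔ NoDrop y z ∧ Dropless (z :: t) := List.isChain_cons_cons

/-- The insertions of `a` strictly after the first entry `y` that give a dropless list: there is one
for each `q` in the list that `a` may follow. -/
lemma countP_insertions_cons (a : ℤ × ℤ) (ha : a.1 < a.2) (s : List (ℤ × ℤ)) :
    ∀ y, (∀ q ∈ y :: s, a.2 < q.2) →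
      (s.permutations'Aux a).countP (fun t => Dropless (y :: t)) =
        if Dropless (y :: s) then (y :: s).countP (fun q => NoDrop q a) else 0 := by
  induction s with
  | nil =>
    intro y _
    by_cases h : NoDrop y a <;> simp [dropless_singleton, dropless_cons_cons, h]
  | cons z zs ih =>
    intro y hs
    have ih' := ih z (fun q hq => hs q (List.mem_cons_of_mem _ hq))
    have hz : a.2 < z.2 := hs z (by simp)
    have haz : NoDrop a z := by unfold NoDrop; omega
    simp only [List.permutations'Aux, List.countP_cons, List.countP_map, Function.comp_def,
      dropless_cons_cons, haz, true_and]
    -- A drop `z < y` forces `a < y`, so no insertion of `a` repairs it.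
    by_cases hyz : NoDrop y z
    · simp only [hyz, true_and, ih', List.countP_cons]
      by_cases hc : Dropless (z :: zs) <;> simp [hc]
    · have hya : ¬ NoDrop y a := by unfold NoDrop at *; omega
      simp [hyz, hya]

lemma countP_insertions (a : ℤ × ℤ) (ha : a.1 < a.2) (s : List (ℤ × ℤ))
    (hs : ∀ q ∈ s, a.2 < q.2) :
    (s.permutations'Aux a).countP (fun t => Dropless t) =
      if Dropless s then s.countP (fun q => NoDrop q a) + 1 else 0 := by
  cases s with
  | nil => simp [Dropless]
  | cons y ys =>
    have hy : a.2 < y.2 := hs y (by simp)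
    have hay : NoDrop a y := by unfold NoDrop; omega
    simp only [List.permutations'Aux, List.countP_cons (a := a :: y :: ys), List.countP_map,
      Function.comp_def, countP_insertions_cons a ha ys y hs, dropless_cons_cons, hay, true_and]
    by_cases hc : Dropless (y :: ys) <;> simp [hc]

/-- The factor `φ(p) + 1`, with the counts in `φ(p)` taken over the entries of `l`. The truncated
subtraction is harmless, as `u > v_p` implies `v > v_p` for an interval `(u, v)`. -/
def factor (l : List (ℤ × ℤ)) (p : ℤ × ℤ) : ℕ :=
  l.countP (fun q => p.2 < q.2) - l.countP (fun q => p.2 < q.1) + 1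

lemma countP_dropless_permutations' (l : List (ℤ × ℤ)) (h1 : ∀ p ∈ l, p.1 < p.2)
    (hl : l.Pairwise fun p q => p.2 < q.2) :
    l.permutations'.countP (fun t => Dropless t) = (l.map (factor l)).prod := by
  induction l with
  | nil => simp [Dropless]
  | cons a l ih =>
    rw [List.pairwise_cons] at hl
    have ha := h1 a (by simp)
    have ih' := ih (fun p hp => h1 p (List.mem_cons_of_mem _ hp)) hl.2
    have hfa : factor (a :: l) a = l.countP (fun q => NoDrop q a) + 1 := by
      have e1 : l.countP (fun q => a.2 < q.2) = l.length := by
        rw [List.countP_eq_length]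
        simpa using hl.1
      have e2 := l.length_eq_countP_add_countP (fun q => decide (a.2 < q.1))
      have e3 : ¬ a.2 < a.1 := by omega
      have e4 : l.countP (fun q => NoDrop q a) = l.countP (fun q => ¬ decide (a.2 < q.1) = true) := by
        simp [NoDrop]
      simp only [factor, List.countP_cons, e1, lt_irrefl, e3, decide_false]
      rw [e4]
      simp only [Bool.false_eq_true, if_false, add_zero]
      omega
    have hfl : l.map (factor (a :: l)) = l.map (factor l) := by
      refine List.map_congr_left fun p hp => ?_
      have hap := hl.1 p hp
      have g1 : ¬ p.2 < a.2 := by omega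
      have g2 : ¬ p.2 < a.1 := by omega
      simp [factor, g1, g2]
    have key : ∀ s ∈ l.permutations', (s.permutations'Aux a).countP (fun t => Dropless t) =
        if Dropless s then l.countP (fun q => NoDrop q a) + 1 else 0 := by
      intro s hs
      have hp := List.mem_permutations'.1 hs
      rw [countP_insertions a ha s (fun q hq => hl.1 q (hp.mem_iff.1 hq)), hp.countP_eq]
    have hsum : ∀ (L : List (List (ℤ × ℤ))) (c : ℕ),
        (L.map fun s => if Dropless s then c else 0).sum = c * L.countP (fun t => Dropless t) := by
      intro L c
      induction L with
      | nil => simp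
      | cons s L ihL => by_cases h : Dropless s <;> simp [h, ihL]; ring
    rw [List.permutations', List.countP_flatMap, List.map_cons, List.prod_cons, hfa, hfl, ← ih',
      ← hsum]
    exact congrArg List.sum (List.map_congr_left key)

/-- Listing the elements in label order identifies the dropless labelings with the dropless
rearrangements of `l`. -/
lemma ncard_dropless_labelings (I : Finset (ℤ × ℤ)) (l : List (ℤ × ℤ)) (hlI : l.Perm I.toList) :
    {f : {x // x ∈ I} ≃ Fin I.card |
        ∀ i j : Fin I.card, (j : ℕ) = (i : ℕ) + 1 →
          ¬ ((f.symm j).val.2 < (f.symm i).val.1)}.ncard =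
      l.permutations'.countP (fun t => Dropless t) := by
  have hnd : l.permutations'.Nodup := by
    rw [← (List.permutations_perm_permutations' l).nodup_iff]
    exact List.nodup_permutations l (hlI.nodup_iff.2 I.nodup_toList)
  have hcard : l.permutations'.countP (fun t => Dropless t) =
      ((l.permutations'.toFinset.filter fun t => Dropless t : Finset _) :
        Set (List (ℤ × ℤ))).ncard := by
    rw [Set.ncard_coe_finset, List.countP_eq_length_filter, ← List.toFinset_card_of_nodup
      (hnd.filter _), List.toFinset_filter]
    simp
  rw [hcard]
  refine Set.ncard_congr (fun f _ => List.ofFn fun i => (f.symm i).val) ?_ ?_ ?_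
  · intro f hf
    have hperm : (List.ofFn fun i => (f.symm i).val).Perm l := by
      refine List.Perm.trans ?_ hlI.symm
      rw [List.perm_ext_iff_of_nodup _ I.nodup_toList]
      · intro x
        simp only [List.mem_ofFn, Finset.mem_toList]
        constructor
        · rintro ⟨i, rfl⟩
          exact (f.symm i).2
        · intro hx
          exact ⟨f ⟨x, hx⟩, by simp⟩
      · rw [List.nodup_ofFn]
        exact Subtype.val_injective.comp f.symm.injective
    simp only [Finset.coe_filter, List.mem_toFinset, List.mem_permutations', Set.mem_ofPred_eq]
    refine ⟨hperm, ?_⟩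
    rw [Dropless, List.isChain_ofFn]
    intro i hi
    exact hf _ _ rfl
  · intro f g _ _ hfg
    have := List.ofFn_injective hfg
    have h2 : f.symm = g.symm := Equiv.ext fun i => Subtype.ext (congrFun this i)
    simpa using congrArg Equiv.symm h2
  · intro t ht
    simp only [Finset.coe_filter, List.mem_toFinset, List.mem_permutations',
      Set.mem_ofPred_eq] at ht
    obtain ⟨htl, hdrop⟩ := ht
    have htI := htl.trans hlI
    have hlen : t.length = I.card := by rw [htI.length_eq, Finset.length_toList]
    have hmem : ∀ x, x ∈ t ↔ x ∈ I := fun x => by rw [htI.mem_iff, Finset.mem_toList]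
    have htn : t.Nodup := htI.nodup_iff.2 I.nodup_toList
    let e : Fin I.card ≃ {x // x ∈ I} :=
      (finCongr hlen.symm).trans ((htn.getEquiv t).trans (Equiv.subtypeEquivRight hmem))
    have he : (List.ofFn fun i => (e i).val) = t := by
      apply List.ext_getElem
      · simp [hlen]
      · intro n h h'
        simp [e]
    refine ⟨e.symm, ?_, by simpa using he⟩
    rw [← he, Dropless, List.isChain_ofFn] at hdrop
    rintro ⟨i, hi⟩ ⟨j, hj⟩ hij
    obtain rfl : j = i + 1 := hij
    simpa [NoDrop] using hdrop i hj

/-- For a finite set `I = {(u_1,v_1),…,(u_r,v_r)}` of ordered pairs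
of integers with `u_i < v_i` and all coordinates distinct, the number of dropless
labelings of the interval order `P_I` (where `(u,v) < (u',v')` iff `v < u'`) equals
`∏_i (φ(i) + 1)` with `φ(i) = #{j : v_j > v_i} − #{j : u_j > v_i}`. -/
theorem dropless_intervalOrder_count (I : Finset (ℤ × ℤ))
    (h1 : ∀ p ∈ I, p.1 < p.2)
    (h2 : ∀ p ∈ I, ∀ q ∈ I, p ≠ q → p.1 ≠ q.1 ∧ p.1 ≠ q.2 ∧ p.2 ≠ q.1 ∧ p.2 ≠ q.2) :
    {f : {x // x ∈ I} ≃ Fin I.card |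
        ∀ i j : Fin I.card, (j : ℕ) = (i : ℕ) + 1 →
          ¬ ((f.symm j).val.2 < (f.symm i).val.1)}.ncard =
    ∏ p ∈ I, ((I.filter fun q => p.2 < q.2).card - (I.filter fun q => p.2 < q.1).card + 1) := by
  let l := I.toList.insertionSort fun p q => p.2 ≤ q.2
  have hlI : l.Perm I.toList := List.perm_insertionSort _ _
  have hmem : ∀ p, p ∈ l ↔ p ∈ I := fun p => by rw [hlI.mem_iff, Finset.mem_toList]
  have hnd : l.Nodup := hlI.nodup_iff.2 I.nodup_toList
  have hsort : l.Pairwise fun p q => p.2 < q.2 := by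
    have : Std.Total (fun p q : ℤ × ℤ => p.2 ≤ q.2) := ⟨fun p q => le_total _ _⟩
    have : IsTrans (ℤ × ℤ) (fun p q => p.2 ≤ q.2) := ⟨fun p q r => le_trans⟩
    have hle : l.Pairwise fun p q => p.2 ≤ q.2 := List.pairwise_insertionSort _ _
    refine (hle.and hnd).imp_of_mem ?_
    intro p q hp hq h
    exact lt_of_le_of_ne h.1 (h2 p ((hmem p).1 hp) q ((hmem q).1 hq) h.2).2.2.2
  rw [ncard_dropless_labelings I l hlI,
    countP_dropless_permutations' l (fun p hp => h1 p ((hmem p).1 hp)) hsort,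
    (hlI.map _).prod_eq, Finset.prod_map_toList]
  refine Finset.prod_congr rfl fun p _ => ?_
  have hcount : ∀ P : ℤ × ℤ → Prop, ∀ [DecidablePred P],
      l.countP (fun q => P q) = (I.filter P).card := by
    intro P _
    rw [hlI.countP_eq, ← Multiset.coe_countP, Finset.coe_toList, Multiset.countP_eq_card_filter]
    rfl
  rw [factor, hcount, hcount]

end

end SkewBorder
end
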